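/- arXiv:1411.4396 — 2 statements merged into one kernel-verified Lean document; each statement's English description precedes it below -/
import Mathlib

section
/- For every η > 0 there exists a unique ξ_η > √2 + 1 such that the Möbius inversion Φ_{−ξ_η e_x, η}(x) = η²(x + ξ_η e_x)/|x + ξ_η e_x|² − ξ_η e_x maps the Clifford torus 𝕋 to a surface of Euclidean area 4√2 π². Moreover η ↦ ξ_η is smooth and strictly increasing on (0,∞), with ξ_η → √2+1 as η → 0 and ξ_η → ∞ as η → ∞. -/
open Real

/-- Parametrization of the Clifford torus in `ℝ³`. -/
noncomputable def cliffordX (φ θ : ℝ) : Fin 3 → ℝ :=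
  ![(Real.sqrt 2 + Real.cos φ) * Real.cos θ,
    (Real.sqrt 2 + Real.cos φ) * Real.sin θ,
    Real.sin φ]

/-- The Euclidean area of the image of the Clifford torus under the Möbius
inversion `Φ_{−ξ e_x, η}`, expressed via the conformal factor `η⁴/|X+ξe_x|⁴`. -/
noncomputable def torArea (ξ η : ℝ) : ℝ :=
  η ^ 4 * ∫ θ in (0:ℝ)..(2 * π), ∫ φ in (0:ℝ)..(2 * π),
    (Real.sqrt 2 + Real.cos φ) /
      (((cliffordX φ θ 0 + ξ) ^ 2 + cliffordX φ θ 1 ^ 2 + cliffordX φ θ 2 ^ 2) ^ 2)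

/-!
The area factors as `A(ξ, η) = η⁴ F(ξ)`, where `F` is the area after inversion in the unit sphere
centred at `-ξ e_x`. The kernel of `F` is holomorphic in `ξ`, so `F` is analytic, and its derivative
is negative since every point of the torus recedes from the centre as `ξ` grows. Clearly `F → 0` at
infinity. As the gap `d` between the centre and the torus shrinks, a piece of the torus of area of
order `d²` lies within distance of order `d` of the centre, so `F` is at least of order `d⁻²` and
tends to infinity. Hence `F` is a decreasing analytic bijection onto `(0, ∞)`, and the solution of
`A(ξ, η) = K` is `ξ = F⁻¹(K / η⁴)`.
-/

open MeasureTheory Filter Set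
open scoped Topology ContDiff

section InverseFunction

theorem contDiffAt_of_eventually_leftInverse {𝕜 E F : Type*} [RCLike 𝕜]
    [NormedAddCommGroup E] [NormedSpace 𝕜 E] [CompleteSpace E]
    [NormedAddCommGroup F] [NormedSpace 𝕜 F]
    {f : E → F} {g : F → E} {f' : E ≃L[𝕜] F} {a : E} {n : WithTop ℕ∞}
    (hf : ContDiffAt 𝕜 n f a) (hf' : HasFDerivAt f (f' : E →L[𝕜] F) a) (hn : n ≠ 0)
    (hg : ∀ᶠ x in 𝓝 a, g (f x) = x) : ContDiffAt 𝕜 n g (f a) :=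
  (hf.to_localInverse hf' hn).congr_of_eventuallyEq
    ((hf.hasStrictFDerivAt' hf' hn).localInverse_unique hg)

theorem contDiffOn_of_invOn {𝕜 : Type*} [RCLike 𝕜] {f g : 𝕜 → 𝕜} {s t : Set 𝕜}
    {n : WithTop ℕ∞} (hs : IsOpen s) (hf : ContDiffOn 𝕜 n f s) (hn : n ≠ 0)
    (hf' : ∀ x ∈ s, deriv f x ≠ 0) (hinv : InvOn g f s t) (hg : MapsTo g t s) :
    ContDiffOn 𝕜 n g t := by
  intro y hy
  have hs_nhds : s ∈ 𝓝 (g y) := hs.mem_nhds (hg hy)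
  have hne : deriv f (g y) ≠ 0 := hf' _ (hg hy)
  have hderiv := (differentiableAt_of_deriv_ne_zero hne).hasDerivAt
  have hsmooth : ContDiffAt 𝕜 n g (f (g y)) :=
    contDiffAt_of_eventually_leftInverse (hf.contDiffAt hs_nhds) (hderiv.hasFDerivAt_equiv hne) hn
      (eventually_of_mem hs_nhds hinv.1)
  rw [hinv.2 hy] at hsmooth
  exact hsmooth.contDiffWithinAt

theorem lt_apply_iff_of_rightInvOn {α β : Type*} [LinearOrder α] [Preorder β] {f : α → β}
    {g : β → α} {s : Set α} {t : Set β} (hf : StrictAntiOn f s) (hinv : RightInvOn g f t)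
    (hg : MapsTo g t s) {x : α} (hx : x ∈ s) {y : β} (hy : y ∈ t) : x < g y ↔ y < f x := by
  rw [← hf.lt_iff_gt (hg hy) hx, hinv hy]

theorem apply_lt_iff_of_rightInvOn {α β : Type*} [LinearOrder α] [Preorder β] {f : α → β}
    {g : β → α} {s : Set α} {t : Set β} (hf : StrictAntiOn f s) (hinv : RightInvOn g f t)
    (hg : MapsTo g t s) {x : α} (hx : x ∈ s) {y : β} (hy : y ∈ t) : g y < x ↔ f x < y := by
  rw [← hf.lt_iff_gt hx (hg hy), hinv hy]

theorem strictAntiOn_of_rightInvOn {α β : Type*} [LinearOrder α] [Preorder β] {f : α → β}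
    {g : β → α} {s : Set α} {t : Set β} (hf : StrictAntiOn f s) (hinv : RightInvOn g f t)
    (hg : MapsTo g t s) : StrictAntiOn g t := fun y hy z hz hyz => by
  rwa [lt_apply_iff_of_rightInvOn hf hinv hg (hg hz) hy, hinv hz]

theorem bijOn_Ioi_of_strictAntiOn {α β : Type*} [ConditionallyCompleteLinearOrder α]
    [TopologicalSpace α] [OrderTopology α] [DenselyOrdered α] [NoMaxOrder α]
    [LinearOrder β] [TopologicalSpace β] [OrderClosedTopology β] {f : α → β} {a : α} {l : β}
    (hanti : StrictAntiOn f (Ioi a)) (hcont : ContinuousOn f (Ioi a))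
    (ha : Tendsto f (𝓝[>] a) atTop) (hl : Tendsto f atTop (𝓝 l)) :
    BijOn f (Ioi a) (Ioi l) := by
  refine ⟨fun x hx => ?_, hanti.injOn, ?_⟩
  · obtain ⟨y, hxy⟩ := exists_gt x
    have hy : y ∈ Ioi a := lt_trans hx hxy
    have hly : l ≤ f y := le_of_tendsto hl <| (eventually_ge_atTop y).mono fun z hyz =>
      hanti.antitoneOn hy (lt_of_lt_of_le hy hyz) hyz
    exact hly.trans_lt (hanti hx hy hxy)
  · have : Nonempty α := ⟨a⟩
    exact isPreconnected_Ioi.intermediate_value_Ioi (l₁ := atTop) (l₂ := 𝓝[>] a)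
      (le_principal_iff.2 (Ioi_mem_atTop a)) inf_le_right hcont hl ha

section Limits

variable {α β : Type*} [LinearOrder α] [LinearOrder β] {f : α → β} {g : β → α} {a : α} {l : β}

theorem tendsto_nhdsGT_atTop_of_rightInvOn [NoMaxOrder α] [TopologicalSpace β] [OrderTopology β]
    (hanti : StrictAntiOn f (Ioi a)) (hinv : RightInvOn g f (Ioi l))
    (hf : MapsTo f (Ioi a) (Ioi l)) (hg : MapsTo g (Ioi l) (Ioi a)) :
    Tendsto g (𝓝[>] l) atTop := by
  refine tendsto_atTop.2 fun b => ?_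
  obtain ⟨x, hx⟩ := exists_gt (max a b)
  have hax : x ∈ Ioi a := (le_max_left a b).trans_lt hx
  filter_upwards [Ioo_mem_nhdsGT (hf hax)] with y hy
  exact (le_max_right a b).trans
    (hx.trans ((lt_apply_iff_of_rightInvOn hanti hinv hg hax hy.1).2 hy.2)).le

theorem tendsto_atTop_nhds_of_rightInvOn [TopologicalSpace α] [OrderTopology α] [NoMaxOrder β]
    (hanti : StrictAntiOn f (Ioi a)) (hinv : RightInvOn g f (Ioi l))
    (hg : MapsTo g (Ioi l) (Ioi a)) :
    Tendsto g atTop (𝓝 a) := by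
  have : Nonempty β := ⟨l⟩
  refine tendsto_order.2 ⟨fun b hb => ?_, fun b hb => ?_⟩
  · filter_upwards [eventually_gt_atTop l] with y hy
    exact hb.trans (hg hy)
  · filter_upwards [eventually_gt_atTop l, eventually_gt_atTop (f b)] with y hy hby
    exact (apply_lt_iff_of_rightInvOn hanti hinv hg hb hy).2 hby

end Limits

theorem strictAntiOn_const_div_pow {K : ℝ} (hK : 0 < K) {m : ℕ} (hm : m ≠ 0) :
    StrictAntiOn (fun η : ℝ => K / η ^ m) (Ioi 0) := fun _ ha _ _ hab =>
  div_lt_div_of_pos_left hK (pow_pos ha m) (pow_lt_pow_left₀ hab ha.le hm)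

theorem tendsto_const_div_pow_nhdsGT_zero {K : ℝ} (hK : 0 < K) {m : ℕ} (hm : m ≠ 0) :
    Tendsto (fun η : ℝ => K / η ^ m) (𝓝[>] 0) atTop := by
  have hpow : Tendsto (fun η : ℝ => η ^ m) (𝓝[>] 0) (𝓝[>] 0) := by
    refine tendsto_nhdsWithin_iff.2 ⟨?_, ?_⟩
    · simpa [hm] using ((continuous_pow m).tendsto (0 : ℝ)).mono_left nhdsWithin_le_nhds
    · exact eventually_mem_nhdsWithin.mono fun η hη => pow_pos (mem_Ioi.1 hη) m
  exact hpow.inv_tendsto_nhdsGT_zero.const_mul_atTop hK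

theorem tendsto_const_div_pow_atTop_nhdsGT {K : ℝ} (hK : 0 < K) {m : ℕ} (hm : m ≠ 0) :
    Tendsto (fun η : ℝ => K / η ^ m) atTop (𝓝[>] 0) :=
  tendsto_nhdsWithin_iff.2 ⟨(tendsto_pow_atTop hm).const_div_atTop K,
    (eventually_gt_atTop 0).mono fun _ hη => div_pos hK (pow_pos hη m)⟩

theorem exists_strictMonoOn_solution_pow_mul_eq {F : ℝ → ℝ} {c K : ℝ} {m : ℕ}
    {n : WithTop ℕ∞} (hF : ContDiffOn ℝ n F (Ioi c)) (hn : n ≠ 0)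
    (hneg : ∀ ξ ∈ Ioi c, deriv F ξ < 0) (htop : Tendsto F (𝓝[>] c) atTop)
    (hzero : Tendsto F atTop (𝓝 0)) (hK : 0 < K) (hm : m ≠ 0) :
    ∃ xi : ℝ → ℝ,
      (∀ η : ℝ, 0 < η → xi η > c ∧ η ^ m * F (xi η) = K ∧
        ∀ ξ : ℝ, ξ > c → η ^ m * F ξ = K → ξ = xi η) ∧
      ContDiffOn ℝ n xi (Ioi 0) ∧ StrictMonoOn xi (Ioi 0) ∧
      Tendsto xi (𝓝[>] 0) (𝓝 c) ∧ Tendsto xi atTop atTop := by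
  have hanti : StrictAntiOn F (Ioi c) :=
    strictAntiOn_of_deriv_neg (convex_Ioi c) hF.continuousOn (by rwa [interior_Ioi])
  have hbij : BijOn F (Ioi c) (Ioi 0) :=
    bijOn_Ioi_of_strictAntiOn hanti hF.continuousOn htop hzero
  obtain ⟨g, hinv, hg⟩ : ∃ g, InvOn g F (Ioi c) (Ioi 0) ∧ MapsTo g (Ioi 0) (Ioi c) :=
    ⟨_, hbij.invOn_invFunOn, hbij.surjOn.mapsTo_invFunOn⟩
  have hmaps : MapsTo (fun η : ℝ => K / η ^ m) (Ioi 0) (Ioi 0) :=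
    fun η hη => div_pos hK (pow_pos hη m)
  have hsmooth : ContDiffOn ℝ n (fun η : ℝ => K / η ^ m) (Ioi 0) :=
    contDiffOn_const.div (contDiffOn_id.pow m) fun η hη => (pow_pos hη m).ne'
  refine ⟨fun η => g (K / η ^ m), fun η hη => ⟨hg (hmaps hη), ?_, fun ξ hξ h => ?_⟩, ?_, ?_, ?_, ?_⟩
  · rw [hinv.2 (hmaps hη), mul_div_cancel₀ _ (pow_pos hη m).ne']
  · change ξ = g (K / η ^ m)
    rw [← h, mul_div_cancel_left₀ _ (pow_pos hη m).ne', hinv.1 hξ]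
  · exact (contDiffOn_of_invOn isOpen_Ioi hF hn (fun ξ hξ => (hneg ξ hξ).ne) hinv hg).comp
      hsmooth hmaps
  · exact (strictAntiOn_of_rightInvOn hanti hinv.2 hg).comp
      (strictAntiOn_const_div_pow hK hm) hmaps
  · exact (tendsto_atTop_nhds_of_rightInvOn hanti hinv.2 hg).comp
      (tendsto_const_div_pow_nhdsGT_zero hK hm)
  · exact (tendsto_nhdsGT_atTop_of_rightInvOn hanti hinv.2 hbij.mapsTo hg).comp
      (tendsto_const_div_pow_atTop_nhdsGT hK hm)

end InverseFunction

section ParametricIntegral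

variable {X : Type*} [TopologicalSpace X] [T2Space X] [MeasurableSpace X]
  [OpensMeasurableSpace X] {μ : Measure X} [IsFiniteMeasureOnCompacts μ] {K : Set X}

theorem setIntegral_pos_of_continuousOn {f : X → ℝ} (hK : IsCompact K) (hμ : 0 < μ K)
    (hf : ContinuousOn f K) (hpos : ∀ p ∈ K, 0 < f p) : 0 < ∫ p in K, f p ∂μ := by
  have hnonneg : 0 ≤ᵐ[μ.restrict K] f :=
    ae_restrict_of_forall_mem hK.measurableSet fun p hp => (hpos p hp).le
  have hsupp : Function.support f ∩ K = K := inter_eq_right.2 fun p hp => (hpos p hp).ne'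
  rwa [setIntegral_pos_iff_support_of_nonneg_ae hnonneg (hf.integrableOn_compact hK), hsupp]

theorem hasDerivAt_setIntegral_of_continuousOn {𝕜 E : Type*} [RCLike 𝕜] [NormedAddCommGroup E]
    [NormedSpace ℝ E] [NormedSpace 𝕜 E] {F F' : 𝕜 → X → E} {U : Set 𝕜} {z : 𝕜}
    (hK : IsCompact K) (hU : U ∈ 𝓝 z) (hF : ∀ w ∈ U, ContinuousOn (F w) K)
    (hF' : ContinuousOn (Function.uncurry F') (U ×ˢ K))
    (hderiv : ∀ w ∈ U, ∀ p ∈ K, HasDerivAt (F · p) (F' w p) w) :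
    HasDerivAt (fun w => ∫ p in K, F w p ∂μ) (∫ p in K, F' z p ∂μ) z := by
  obtain ⟨V, hV, hVU, hVc⟩ := local_compact_nhds hU
  obtain ⟨C, hC⟩ := (hVc.prod hK).exists_bound_of_continuousOn
    (hF'.mono (prod_mono hVU Subset.rfl))
  have hF'z : ContinuousOn (F' z) K :=
    hF'.comp (f := fun p => (z, p)) (by fun_prop) fun _ hp => ⟨mem_of_mem_nhds hU, hp⟩
  refine (hasDerivAt_integral_of_dominated_loc_of_deriv_le (bound := fun _ => C) hV
    (eventually_of_mem hU fun w hw => (hF w hw).aestronglyMeasurable_of_isCompact hK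
      hK.measurableSet)
    ((hF z (mem_of_mem_nhds hU)).integrableOn_compact hK)
    (hF'z.aestronglyMeasurable_of_isCompact hK hK.measurableSet) ?_
    (continuousOn_const.integrableOn_compact hK) ?_).2
  · exact ae_restrict_of_forall_mem hK.measurableSet fun p hp w hw => hC (w, p) ⟨hw, hp⟩
  · exact ae_restrict_of_forall_mem hK.measurableSet fun p hp w hw => hderiv w (hVU hw) p hp

end ParametricIntegral

section Kernel

theorem sq_add_ofReal_ne_zero {𝕜 : Type*} [RCLike 𝕜] {z : 𝕜} {q : ℝ} (hz : 0 < RCLike.re z)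
    (hq : 0 ≤ q) : z ^ 2 + (q : 𝕜) ≠ 0 := by
  intro h
  have hre : RCLike.re z ^ 2 - RCLike.im z ^ 2 + q = 0 := by
    simpa [sq] using congrArg RCLike.re h
  have him : RCLike.re z * RCLike.im z + RCLike.im z * RCLike.re z = 0 := by
    simpa [sq] using congrArg RCLike.im h
  have him_zero : RCLike.im z = 0 := by nlinarith
  rw [him_zero] at hre
  nlinarith

theorem hasDerivAt_div_sq_add_sq {𝕜 : Type*} [NontriviallyNormedField 𝕜] {w x q z : 𝕜}
    (h : (z + x) ^ 2 + q ≠ 0) :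
    HasDerivAt (fun z => w / ((z + x) ^ 2 + q) ^ 2)
      (-(4 * w * (z + x)) / ((z + x) ^ 2 + q) ^ 3) z := by
  have hbase : HasDerivAt (fun z => (z + x) ^ 2 + q) (2 * (z + x)) z := by
    simpa using (((hasDerivAt_id z).add_const x).pow 2).add_const q
  refine ((hasDerivAt_const z w).div (hbase.pow 2) (pow_ne_zero 2 h)).congr_deriv ?_
  simp only [Pi.pow_apply]
  field_simp
  ring

end Kernel

/-- A compact weighted surface, given in cylindrical coordinates about an axis and parametrized by
`domain`: `density` is its area density, `axial` the coordinate along the axis and `radialSq` the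
squared distance from the axis. It lies in the half-space where the axial coordinate is at
least `-c`. -/
structure AxialSurface (X : Type*) [TopologicalSpace X] (c : ℝ) where
  domain : Set X
  density : X → ℝ
  axial : X → ℝ
  radialSq : X → ℝ
  isCompact_domain : IsCompact domain
  continuousOn_density : ContinuousOn density domain
  continuousOn_axial : ContinuousOn axial domain
  continuousOn_radialSq : ContinuousOn radialSq domain
  density_pos : ∀ p ∈ domain, 0 < density p
  neg_le_axial : ∀ p ∈ domain, -c ≤ axial p
  radialSq_nonneg : ∀ p ∈ domain, 0 ≤ radialSq p

namespace AxialSurface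

variable {X : Type*} [TopologicalSpace X] {c : ℝ} (S : AxialSurface X c)

/-- The area of the image of `S` under inversion in the unit sphere centred at the point `-ξ` of
the axis: inversion scales areas by the inverse fourth power of the distance to the centre. -/
noncomputable def inversionArea [MeasurableSpace X] (μ : Measure X) (ξ : ℝ) : ℝ :=
  ∫ p in S.domain, S.density p / ((ξ + S.axial p) ^ 2 + S.radialSq p) ^ 2 ∂μ

theorem sub_sq_le_distSq {ξ : ℝ} (hξ : c < ξ) {p : X} (hp : p ∈ S.domain) :
    (ξ - c) ^ 2 ≤ (ξ + S.axial p) ^ 2 + S.radialSq p := by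
  nlinarith [S.neg_le_axial p hp, S.radialSq_nonneg p hp]

theorem distSq_pos {ξ : ℝ} (hξ : c < ξ) {p : X} (hp : p ∈ S.domain) :
    0 < (ξ + S.axial p) ^ 2 + S.radialSq p :=
  (pow_pos (sub_pos.2 hξ) 2).trans_le (S.sub_sq_le_distSq hξ hp)

theorem distSq_ne_zero {𝕜 : Type*} [RCLike 𝕜] {z : 𝕜} (hz : c < RCLike.re z) {p : X}
    (hp : p ∈ S.domain) : (z + (S.axial p : 𝕜)) ^ 2 + (S.radialSq p : 𝕜) ≠ 0 := by
  refine sq_add_ofReal_ne_zero ?_ (S.radialSq_nonneg p hp)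
  rw [map_add, RCLike.ofReal_re]
  linarith [S.neg_le_axial p hp]

theorem continuousOn_inversionArea_integrand {ξ : ℝ} (hξ : c < ξ) :
    ContinuousOn (fun p => S.density p / ((ξ + S.axial p) ^ 2 + S.radialSq p) ^ 2) S.domain :=
  S.continuousOn_density.div (((S.continuousOn_axial.const_add ξ).pow 2).add
    S.continuousOn_radialSq |>.pow 2) fun _ hp => (pow_pos (S.distSq_pos hξ hp) 2).ne'

variable [T2Space X] [MeasurableSpace X] [OpensMeasurableSpace X] {μ : Measure X}

theorem inversionArea_nonneg (ξ : ℝ) : 0 ≤ S.inversionArea μ ξ :=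
  setIntegral_nonneg S.isCompact_domain.measurableSet fun p hp =>
    div_nonneg (S.density_pos p hp).le (sq_nonneg _)

variable [IsFiniteMeasureOnCompacts μ]

theorem hasDerivAt_integral_ofReal {𝕜 : Type*} [RCLike 𝕜] {z : 𝕜} (hz : c < RCLike.re z) :
    HasDerivAt
      (fun z : 𝕜 => ∫ p in S.domain,
        (S.density p : 𝕜) / ((z + (S.axial p : 𝕜)) ^ 2 + (S.radialSq p : 𝕜)) ^ 2 ∂μ)
      (∫ p in S.domain, -(4 * (S.density p : 𝕜) * (z + (S.axial p : 𝕜))) /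
        ((z + (S.axial p : 𝕜)) ^ 2 + (S.radialSq p : 𝕜)) ^ 3 ∂μ) z := by
  have hU : {z : 𝕜 | c < RCLike.re z} ∈ 𝓝 z :=
    (isOpen_lt continuous_const RCLike.continuous_re).mem_nhds hz
  have hdensity : ContinuousOn (fun p => (S.density p : 𝕜)) S.domain :=
    RCLike.continuous_ofReal.comp_continuousOn S.continuousOn_density
  have haxial : ContinuousOn (fun p => (S.axial p : 𝕜)) S.domain :=
    RCLike.continuous_ofReal.comp_continuousOn S.continuousOn_axial
  have hradial : ContinuousOn (fun p => (S.radialSq p : 𝕜)) S.domain :=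
    RCLike.continuous_ofReal.comp_continuousOn S.continuousOn_radialSq
  refine hasDerivAt_setIntegral_of_continuousOn S.isCompact_domain hU (fun w hw => ?_) ?_
    fun w hw p hp => hasDerivAt_div_sq_add_sq (S.distSq_ne_zero hw hp)
  · exact hdensity.div (by fun_prop) fun p hp => pow_ne_zero 2 (S.distSq_ne_zero hw hp)
  · have hsnd : MapsTo Prod.snd ({z : 𝕜 | c < RCLike.re z} ×ˢ S.domain) S.domain :=
      fun _ hp => hp.2
    have hdensity' := hdensity.comp continuousOn_snd hsnd
    have haxial' := haxial.comp continuousOn_snd hsnd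
    have hradial' := hradial.comp continuousOn_snd hsnd
    simp only [Function.comp_def] at hdensity' haxial' hradial'
    exact ContinuousOn.div (by fun_prop) (by fun_prop)
      fun p hp => pow_ne_zero 3 (S.distSq_ne_zero hp.1 hp.2)

theorem contDiffOn_inversionArea : ContDiffOn ℝ ω (S.inversionArea μ) (Ioi c) := by
  intro ξ hξ
  set G : ℂ → ℂ := fun z => ∫ p in S.domain,
    (S.density p : ℂ) / ((z + (S.axial p : ℂ)) ^ 2 + (S.radialSq p : ℂ)) ^ 2 ∂μ with hG
  have hopen : IsOpen {z : ℂ | c < z.re} := isOpen_lt continuous_const Complex.continuous_re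
  have hdiff : DifferentiableOn ℂ G {z : ℂ | c < z.re} := fun z hz =>
    (S.hasDerivAt_integral_ofReal (𝕜 := ℂ) hz).differentiableAt.differentiableWithinAt
  have hG_re : (fun x : ℝ => (G x).re) = S.inversionArea μ := by
    ext x
    rw [inversionArea, ← Complex.ofReal_re (∫ p in S.domain, _ ∂μ), ← integral_complex_ofReal]
    simp [hG]
  rw [← hG_re]
  exact (hdiff.analyticAt (hopen.mem_nhds hξ)).contDiffAt.real_of_complex.contDiffWithinAt

theorem deriv_inversionArea_neg (hμ : 0 < μ S.domain) {ξ : ℝ} (hξ : c < ξ) :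
    deriv (S.inversionArea μ) ξ < 0 := by
  have hderiv : HasDerivAt (S.inversionArea μ) (∫ p in S.domain,
      -(4 * S.density p * (ξ + S.axial p)) / ((ξ + S.axial p) ^ 2 + S.radialSq p) ^ 3 ∂μ) ξ :=
    S.hasDerivAt_integral_ofReal (𝕜 := ℝ) hξ
  have hpos : 0 < ∫ p in S.domain,
      4 * S.density p * (ξ + S.axial p) / ((ξ + S.axial p) ^ 2 + S.radialSq p) ^ 3 ∂μ := by
    refine setIntegral_pos_of_continuousOn S.isCompact_domain hμ ?_ fun p hp => ?_
    · have := S.continuousOn_density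
      have := S.continuousOn_axial
      have := S.continuousOn_radialSq
      exact ContinuousOn.div (by fun_prop) (by fun_prop)
        fun p hp => (pow_pos (S.distSq_pos hξ hp) 3).ne'
    · have haxial : 0 < ξ + S.axial p := by linarith [S.neg_le_axial p hp]
      exact div_pos (mul_pos (mul_pos four_pos (S.density_pos p hp)) haxial)
        (pow_pos (S.distSq_pos hξ hp) 3)
  rw [hderiv.deriv]
  simpa only [neg_div, integral_neg, neg_neg_iff_pos] using neg_neg_iff_pos.2 hpos

theorem inversionArea_le {ξ : ℝ} (hξ : c < ξ) :
    S.inversionArea μ ξ ≤ (∫ p in S.domain, S.density p ∂μ) / (ξ - c) ^ 4 := by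
  rw [← integral_div]
  refine setIntegral_mono_on
    ((S.continuousOn_inversionArea_integrand hξ).integrableOn_compact S.isCompact_domain)
    ((S.continuousOn_density.integrableOn_compact S.isCompact_domain).div_const _)
    S.isCompact_domain.measurableSet fun p hp => ?_
  rw [show (ξ - c) ^ 4 = ((ξ - c) ^ 2) ^ 2 by ring]
  have := sub_pos.2 hξ
  have := S.density_pos p hp
  gcongr
  exact S.sub_sq_le_distSq hξ hp

theorem tendsto_inversionArea_atTop : Tendsto (S.inversionArea μ) atTop (𝓝 0) := by
  have hbound : Tendsto (fun ξ => (∫ p in S.domain, S.density p ∂μ) / (ξ - c) ^ 4) atTop (𝓝 0) :=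
    ((tendsto_pow_atTop four_ne_zero).comp (tendsto_atTop_add_const_right atTop (-c)
      tendsto_id)).const_div_atTop _
  exact squeeze_zero' (Eventually.of_forall S.inversionArea_nonneg)
    ((eventually_gt_atTop c).mono fun ξ hξ => S.inversionArea_le hξ) hbound

theorem le_inversionArea_of_subset {B : Set X} (hB : MeasurableSet B) (hBS : B ⊆ S.domain)
    {ξ m M : ℝ} (hξ : c < ξ) (hdensity : ∀ p ∈ B, m ≤ S.density p)
    (hdist : ∀ p ∈ B, (ξ + S.axial p) ^ 2 + S.radialSq p ≤ M) :
    m / M ^ 2 * μ.real B ≤ S.inversionArea μ ξ := by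
  have hint : IntegrableOn (fun p => S.density p / ((ξ + S.axial p) ^ 2 + S.radialSq p) ^ 2)
      S.domain μ :=
    (S.continuousOn_inversionArea_integrand hξ).integrableOn_compact S.isCompact_domain
  calc m / M ^ 2 * μ.real B
      ≤ ∫ p in B, S.density p / ((ξ + S.axial p) ^ 2 + S.radialSq p) ^ 2 ∂μ := by
        refine setIntegral_ge_of_const_le_real hB
          (measure_ne_top_of_subset hBS S.isCompact_domain.measure_ne_top)
          (fun p hp => ?_) (hint.mono_set hBS)
        have hpos := S.distSq_pos hξ (hBS hp)
        exact div_le_div₀ (S.density_pos p (hBS hp)).le (hdensity p hp) (pow_pos hpos 2)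
          (pow_le_pow_left₀ hpos.le (hdist p hp) 2)
    _ ≤ S.inversionArea μ ξ := by
        refine setIntegral_mono_set hint ?_ hBS.eventuallyLE
        exact ae_restrict_of_forall_mem S.isCompact_domain.measurableSet fun p hp =>
          div_nonneg (S.density_pos p hp).le (sq_nonneg _)

end AxialSurface

section RevolutionTorus

variable {R : ℝ}

theorem add_cos_pos (hR : 1 < R) (φ : ℝ) : 0 < R + cos φ := by
  linarith [neg_one_le_cos φ]

theorem neg_le_add_cos_mul_cos (hR : 1 < R) (φ θ : ℝ) : -(R + 1) ≤ (R + cos φ) * cos θ := by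
  nlinarith [mul_nonneg (add_cos_pos hR φ).le (neg_le_iff_add_nonneg.1 (neg_one_le_cos θ)),
    cos_le_one φ]

/-- The torus of revolution with core radius `R` and tube radius `1`, parametrized by the pairs
`(θ, φ)` of longitude and latitude; the axis is a line through the centre in the plane of the core
circle. -/
noncomputable def revolutionTorus (hR : 1 < R) : AxialSurface (ℝ × ℝ) (R + 1) where
  domain := Icc 0 (2 * π) ×ˢ Icc 0 (2 * π)
  density p := R + cos p.2
  axial p := (R + cos p.2) * cos p.1
  radialSq p := ((R + cos p.2) * sin p.1) ^ 2 + sin p.2 ^ 2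
  isCompact_domain := isCompact_Icc.prod isCompact_Icc
  continuousOn_density := by fun_prop
  continuousOn_axial := by fun_prop
  continuousOn_radialSq := by fun_prop
  density_pos p _ := add_cos_pos hR p.2
  neg_le_axial p _ := neg_le_add_cos_mul_cos hR p.2 p.1
  radialSq_nonneg p _ := by positivity

/-- The area of the image of the torus of revolution with core radius `R` and tube radius `1` under
the inversion in the sphere of radius `η` centred at `-ξ e_x`. -/
noncomputable def revolutionTorusArea (R ξ η : ℝ) : ℝ :=
  η ^ 4 * ∫ θ in (0 : ℝ)..(2 * π), ∫ φ in (0 : ℝ)..(2 * π),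
    (R + cos φ) /
      (((R + cos φ) * cos θ + ξ) ^ 2 + ((R + cos φ) * sin θ) ^ 2 + sin φ ^ 2) ^ 2

theorem torArea_eq_revolutionTorusArea (ξ η : ℝ) :
    torArea ξ η = revolutionTorusArea (√2) ξ η :=
  rfl

theorem revolutionTorusArea_eq (hR : 1 < R) {ξ : ℝ} (hξ : R + 1 < ξ) (η : ℝ) :
    revolutionTorusArea R ξ η = η ^ 4 * (revolutionTorus hR).inversionArea volume ξ := by
  have hint := ((revolutionTorus hR).continuousOn_inversionArea_integrand hξ).integrableOn_compact
    (revolutionTorus hR).isCompact_domain (μ := volume)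
  rw [revolutionTorusArea, AxialSurface.inversionArea]
  simp only [revolutionTorus, Measure.volume_eq_prod] at hint ⊢
  rw [setIntegral_prod _ hint]
  simp only [intervalIntegral.integral_of_le two_pi_pos.le, integral_Icc_eq_integral_Ioc,
    add_comm ξ, add_assoc]

theorem volume_revolutionTorus_domain_pos (hR : 1 < R) :
    0 < volume (revolutionTorus hR).domain := by
  rw [revolutionTorus, Measure.volume_eq_prod, Measure.prod_prod, Real.volume_Icc, sub_zero]
  exact ENNReal.mul_pos (by simp [pi_pos]) (by simp [pi_pos])

theorem revolutionTorus_distSq_le (hR : 1 < R) {d θ φ : ℝ} (hd : d ≤ 1) (hθ : |θ - π| ≤ d)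
    (hφ : |φ| ≤ d) :
    (R + 1 + d + (R + cos φ) * cos θ) ^ 2 + (((R + cos φ) * sin θ) ^ 2 + sin φ ^ 2) ≤
      ((R + 3) * d) ^ 2 := by
  have hd0 : 0 ≤ d := (abs_nonneg φ).trans hφ
  have hcosφ : 1 - cos φ ≤ d / 2 := by
    nlinarith [one_sub_sq_div_two_le_cos (x := φ), sq_le_sq' (abs_le.1 hφ).1 (abs_le.1 hφ).2]
  have hcosθ : 1 + cos θ ≤ d ^ 2 / 2 := by
    have := one_sub_sq_div_two_le_cos (x := θ - π)
    rw [cos_sub_pi] at this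
    linarith [sq_le_sq' (abs_le.1 hθ).1 (abs_le.1 hθ).2]
  have hsin : sin φ ^ 2 ≤ d ^ 2 := sq_le_sq.2 ((abs_sin_le_abs.trans hφ).trans (le_abs_self d))
  have hgap : (d + (1 - cos φ)) ^ 2 ≤ (3 / 2 * d) ^ 2 :=
    pow_le_pow_left₀ (by linarith [cos_le_one φ]) (by linarith) 2
  have hangle : (R + 1 + d) * (R + cos φ) * (1 + cos θ) ≤ (R + 2) * (R + 1) * (d ^ 2 / 2) := by
    refine mul_le_mul (mul_le_mul (by linarith) ?_ (add_cos_pos hR φ).le (by linarith)) hcosθ ?_ ?_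
    · linarith [cos_le_one φ]
    · linarith [neg_one_le_cos θ]
    · exact mul_nonneg (by linarith) (by linarith)
  calc (R + 1 + d + (R + cos φ) * cos θ) ^ 2 + (((R + cos φ) * sin θ) ^ 2 + sin φ ^ 2)
      = (d + (1 - cos φ)) ^ 2 + 2 * ((R + 1 + d) * (R + cos φ) * (1 + cos θ)) + sin φ ^ 2 := by
        linear_combination (R + cos φ) ^ 2 * sin_sq_add_cos_sq θ
    _ ≤ (3 / 2 * d) ^ 2 + 2 * ((R + 2) * (R + 1) * (d ^ 2 / 2)) + d ^ 2 := by gcongr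
    _ ≤ ((R + 3) * d) ^ 2 := by nlinarith [sq_nonneg d]

theorem le_inversionArea_revolutionTorus (hR : 1 < R) {d : ℝ} (hd0 : 0 < d) (hd : d ≤ 1) :
    (R - 1) / (R + 3) ^ 4 / d ^ 2 ≤ (revolutionTorus hR).inversionArea volume (R + 1 + d) := by
  -- `(π, 0)` parametrizes the point of the torus nearest the centre of inversion.
  set B : Set (ℝ × ℝ) := Icc π (π + d) ×ˢ Icc 0 d
  have hB : B ⊆ (revolutionTorus hR).domain :=
    prod_mono (Icc_subset_Icc pi_pos.le (by linarith [pi_gt_three]))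
      (Icc_subset_Icc_right (by linarith [pi_gt_three]))
  have hvol : volume.real B = d ^ 2 := by
    rw [Measure.volume_eq_prod, measureReal_prod_prod]
    simp [hd0.le, sq]
  calc (R - 1) / (R + 3) ^ 4 / d ^ 2 = (R - 1) / (((R + 3) * d) ^ 2) ^ 2 * volume.real B := by
        rw [hvol]
        field_simp
    _ ≤ (revolutionTorus hR).inversionArea volume (R + 1 + d) := by
        refine AxialSurface.le_inversionArea_of_subset _ (measurableSet_Icc.prod measurableSet_Icc)
          hB (by linarith) (fun p _ => ?_) fun p hp => ?_
        · linarith [neg_one_le_cos p.2, show (revolutionTorus hR).density p = R + cos p.2 from rfl]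
        · exact revolutionTorus_distSq_le hR hd
            (abs_le.2 ⟨by linarith [hp.1.1], by linarith [hp.1.2]⟩)
            (abs_le.2 ⟨by linarith [hp.2.1], hp.2.2⟩)

theorem tendsto_inversionArea_revolutionTorus (hR : 1 < R) :
    Tendsto ((revolutionTorus hR).inversionArea volume) (𝓝[>] (R + 1)) atTop := by
  have hK : 0 < (R - 1) / (R + 3) ^ 4 := div_pos (by linarith) (pow_pos (by linarith) 4)
  have hshift : Tendsto (fun ξ => ξ - (R + 1)) (𝓝[>] (R + 1)) (𝓝[>] 0) := by
    refine tendsto_nhdsWithin_iff.2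
      ⟨?_, eventually_mem_nhdsWithin.mono fun ξ hξ => mem_Ioi.2 (sub_pos.2 hξ)⟩
    simpa using ((continuous_sub_right (R + 1)).tendsto (R + 1)).mono_left nhdsWithin_le_nhds
  refine tendsto_atTop_mono' _ ?_ ((tendsto_const_div_pow_nhdsGT_zero hK two_ne_zero).comp hshift)
  filter_upwards [Ioo_mem_nhdsGT (lt_add_one (R + 1))] with ξ hξ
  simpa using le_inversionArea_revolutionTorus hR (d := ξ - (R + 1)) (by linarith [hξ.1])
    (by linarith [hξ.2])

end RevolutionTorus

theorem stmt5_general {R K : ℝ} (hR : 1 < R) (hK : 0 < K) :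
    ∃ xi : ℝ → ℝ,
      (∀ η : ℝ, 0 < η → xi η > R + 1 ∧ revolutionTorusArea R (xi η) η = K ∧
        ∀ ξ : ℝ, ξ > R + 1 → revolutionTorusArea R ξ η = K → ξ = xi η) ∧
      ContDiffOn ℝ ω xi (Ioi 0) ∧ StrictMonoOn xi (Ioi 0) ∧
      Tendsto xi (𝓝[>] 0) (𝓝 (R + 1)) ∧ Tendsto xi atTop atTop := by
  obtain ⟨xi, hxi, hregular⟩ := exists_strictMonoOn_solution_pow_mul_eq
    (revolutionTorus hR).contDiffOn_inversionArea (by simp)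
    (fun _ => (revolutionTorus hR).deriv_inversionArea_neg (volume_revolutionTorus_domain_pos hR))
    (tendsto_inversionArea_revolutionTorus hR) (revolutionTorus hR).tendsto_inversionArea_atTop
    hK four_ne_zero
  refine ⟨xi, fun η hη => ?_, hregular⟩
  obtain ⟨hgt, heq, huniq⟩ := hxi η hη
  refine ⟨hgt, (revolutionTorusArea_eq hR hgt η).trans heq, fun ξ hξ h => huniq ξ hξ ?_⟩
  rwa [← revolutionTorusArea_eq hR hξ η]

/-- For every `η > 0` there is a unique `ξ_η > √2+1` such that the Möbius inversion
`Φ_{−ξ_η e_x, η}` maps the Clifford torus to a surface of area `4√2π²`; moreover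
`η ↦ ξ_η` is smooth and strictly increasing on `(0,∞)`, with `ξ_η → √2+1` as
`η → 0⁺` and `ξ_η → ∞` as `η → ∞`. -/
theorem stmt5 :
    ∃ xi : ℝ → ℝ,
      (∀ η : ℝ, 0 < η →
        xi η > Real.sqrt 2 + 1 ∧ torArea (xi η) η = 4 * Real.sqrt 2 * π ^ 2 ∧
        ∀ ξ : ℝ, ξ > Real.sqrt 2 + 1 → torArea ξ η = 4 * Real.sqrt 2 * π ^ 2 → ξ = xi η) ∧
      ContDiffOn ℝ (⊤ : ℕ∞) xi (Set.Ioi 0) ∧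
      StrictMonoOn xi (Set.Ioi 0) ∧
      Filter.Tendsto xi (nhdsWithin 0 (Set.Ioi 0)) (nhds (Real.sqrt 2 + 1)) ∧
      Filter.Tendsto xi Filter.atTop Filter.atTop := by
  simp only [torArea_eq_revolutionTorusArea]
  obtain ⟨xi, hxi, hsmooth, hlimits⟩ := stmt5_general one_lt_sqrt_two
    (show 0 < 4 * √2 * π ^ 2 by positivity)
  exact ⟨xi, hxi, hsmooth.of_le le_top, hlimits⟩
end

section
/- Let ξ̃_η > 0 be defined so that the inversion Φ_{0,η} of the translated Clifford torus 𝕋_{ξ̃_η} := 𝕋 − (√2+1+ξ̃_η) e_x has Euclidean area 4√2π². Then η²/ξ̃_η → 2·(2π²)^{1/4} as η → 0; more precisely η⁴/ξ̃_η² = 4√2π + O(η²). -/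
open Real

/-- The Euclidean area of the image under `Φ_{0,η}` of the translated Clifford
torus `𝕋 − (√2+1+s)e_x`, via the conformal factor `η⁴/|Y|⁴`. -/
noncomputable def degArea (s η : ℝ) : ℝ :=
  η ^ 4 * ∫ θ in (-π)..π, ∫ φ in (-π)..π,
    (Real.sqrt 2 + Real.cos φ) /
      (((cliffordX φ θ 0 - (Real.sqrt 2 + 1 + s)) ^ 2
        + cliffordX φ θ 1 ^ 2 + cliffordX φ θ 2 ^ 2) ^ 2)

/-!
For `s > 0` put `a = √2 + 1 + s`, `D = a² - 1` and `w(θ) = (√2 - 1) s² + 2 a (1 - cos θ)`. The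
squared distance from `a e_x` to the point `X(φ, θ)` of the torus is affine in `cos φ`, so the
`φ`-integral is elementary and the area of the inverted torus becomes
`2 π η⁴ ∫ (D + w) / (w (2 D + w)) ^ (3/2) dθ`.

As `s → 0` this concentrates at `θ = 0`, where `w` degenerates. Replacing the integrand by
`cos (θ / 2) / (2 √(2 D) w ^ (3/2))`, which has an elementary primitive, costs at most
`w ^ (-1/2) = O(1 / s)` pointwise and shows that the area is `η⁴ (π + O(s)) / s²`. Prescribing the
area `A` first forces `s = O(η)`, since the torus lies at distance at least `s` from `a e_x`. The
expansion then gives `s = O(η²)`, and hence `η⁴ / s² = A / π + O(s) = A / π + O(η²)`.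
-/

open Filter Topology Asymptotics intervalIntegral

section TrigonometricIntegrals

variable {P Q : ℝ}

lemma add_mul_cos_pos (h : |Q| < P) (x : ℝ) : 0 < P + Q * cos x := by
  have hQ : |Q * cos x| ≤ |Q| := by
    rw [abs_mul]
    exact mul_le_of_le_one_right (abs_nonneg Q) (abs_cos_le_one x)
  linarith [neg_abs_le (Q * cos x)]

lemma hasDerivAt_sin_div_add_mul_cos {x : ℝ} (hx : P + Q * cos x ≠ 0) :
    HasDerivAt (fun y ↦ sin y / (P + Q * cos y)) ((Q + P * cos x) / (P + Q * cos x) ^ 2) x := by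
  have hden : HasDerivAt (fun y ↦ P + Q * cos y) (Q * -sin x) x :=
    ((hasDerivAt_cos x).const_mul Q).const_add P
  refine ((hasDerivAt_sin x).fun_div hden hx).congr_deriv ?_
  congr 1
  linear_combination Q * sin_sq_add_cos_sq x

-- Unlike the half-angle substitution `tan (x / 2)`, this primitive is smooth on all of `ℝ`.
lemma hasDerivAt_sub_arctan_div_add_mul_cos {R : ℝ} (hR : 0 < R) (hPQ : R ^ 2 = P ^ 2 - Q ^ 2)
    (h : |Q| < P) (x : ℝ) :
    HasDerivAt (fun y ↦ (y - 2 * arctan (Q * sin y / (P + R + Q * cos y))) / R)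
      (1 / (P + Q * cos x)) x := by
  have hd : 0 < P + Q * cos x := add_mul_cos_pos h x
  have he : 0 < P + R + Q * cos x := by linarith
  have hP : 0 < P + R := by linarith [abs_nonneg Q]
  have hden : HasDerivAt (fun y ↦ P + R + Q * cos y) (Q * -sin x) x :=
    ((hasDerivAt_cos x).const_mul Q).const_add (P + R)
  have harctan := (((hasDerivAt_sin x).const_mul Q).fun_div hden he.ne').arctan
  refine (((hasDerivAt_id' x).sub (harctan.const_mul 2)).div_const R).congr_deriv ?_
  have hsq : (P + R + Q * cos x) ^ 2 + (Q * sin x) ^ 2 = 2 * (P + R) * (P + Q * cos x) := by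
    linear_combination Q ^ 2 * sin_sq_add_cos_sq x + hPQ
  have hone : 1 + (Q * sin x / (P + R + Q * cos x)) ^ 2
      = 2 * (P + R) * (P + Q * cos x) / (P + R + Q * cos x) ^ 2 := by
    rw [← hsq]
    field_simp
  have hnum : Q * cos x * (P + R + Q * cos x) - Q * sin x * (Q * -sin x)
      = (P + R) * (P + Q * cos x - R) := by
    linear_combination Q ^ 2 * sin_sq_add_cos_sq x + hPQ
  rw [hone, hnum]
  field_simp
  ring

lemma integral_one_div_add_mul_cos (h : |Q| < P) :
    ∫ x in (-π)..π, 1 / (P + Q * cos x) = 2 * π / √(P ^ 2 - Q ^ 2) := by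
  have hpos : 0 < P ^ 2 - Q ^ 2 := sub_pos.2 (sq_lt_sq' (neg_lt_of_abs_lt h) (lt_of_abs_lt h))
  have hcont : Continuous fun x ↦ 1 / (P + Q * cos x) :=
    .div (by fun_prop) (by fun_prop) fun x ↦ (add_mul_cos_pos h x).ne'
  rw [integral_eq_sub_of_hasDerivAt (fun x _ ↦ hasDerivAt_sub_arctan_div_add_mul_cos
    (sqrt_pos.2 hpos) (sq_sqrt hpos.le) h x) (hcont.intervalIntegrable _ _)]
  simp only [sin_neg, sin_pi, neg_zero, mul_zero, zero_div, arctan_zero]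
  ring

lemma integral_add_mul_cos_div_sq_eq_zero (h : |Q| < P) :
    ∫ x in (-π)..π, (Q + P * cos x) / (P + Q * cos x) ^ 2 = 0 := by
  have hcont : Continuous fun x ↦ (Q + P * cos x) / (P + Q * cos x) ^ 2 :=
    .div (by fun_prop) (by fun_prop) fun x ↦ (pow_pos (add_mul_cos_pos h x) 2).ne'
  rw [integral_eq_sub_of_hasDerivAt
    (fun x _ ↦ hasDerivAt_sin_div_add_mul_cos (add_mul_cos_pos h x).ne')
    (hcont.intervalIntegrable _ _)]
  simp only [sin_neg, sin_pi, neg_zero, zero_div, sub_zero]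

lemma integral_add_mul_cos_div_sq (A B : ℝ) (h : |Q| < P) :
    ∫ x in (-π)..π, (A + B * cos x) / (P + Q * cos x) ^ 2
      = 2 * π * ((A * P - B * Q) / √(P ^ 2 - Q ^ 2) ^ 3) := by
  have hpos : 0 < P ^ 2 - Q ^ 2 := sub_pos.2 (sq_lt_sq' (neg_lt_of_abs_lt h) (lt_of_abs_lt h))
  have hsq : √(P ^ 2 - Q ^ 2) ^ 2 = P ^ 2 - Q ^ 2 := sq_sqrt hpos.le
  have hsplit (x : ℝ) : (A + B * cos x) / (P + Q * cos x) ^ 2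
      = (A * P - B * Q) / (P ^ 2 - Q ^ 2) * (1 / (P + Q * cos x))
        + (B * P - A * Q) / (P ^ 2 - Q ^ 2) * ((Q + P * cos x) / (P + Q * cos x) ^ 2) := by
    have hd := (add_mul_cos_pos h x).ne'
    field_simp [hd]
    ring
  have hcont₁ : Continuous fun x ↦ 1 / (P + Q * cos x) :=
    .div (by fun_prop) (by fun_prop) fun x ↦ (add_mul_cos_pos h x).ne'
  have hcont₂ : Continuous fun x ↦ (Q + P * cos x) / (P + Q * cos x) ^ 2 :=
    .div (by fun_prop) (by fun_prop) fun x ↦ (pow_pos (add_mul_cos_pos h x) 2).ne'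
  simp only [hsplit]
  rw [integral_add ((hcont₁.intervalIntegrable _ _).const_mul _)
      ((hcont₂.intervalIntegrable _ _).const_mul _),
    integral_const_mul, integral_const_mul, integral_one_div_add_mul_cos h,
    integral_add_mul_cos_div_sq_eq_zero h, mul_zero, add_zero]
  field_simp
  rw [hsq]

lemma one_sub_cos_eq_two_mul_sin_half_sq (x : ℝ) : 1 - cos x = 2 * sin (x / 2) ^ 2 := by
  rw [sin_sq_eq_half_sub, mul_div_cancel₀ x two_ne_zero]
  ring

variable {k m : ℝ}

lemma le_add_mul_one_sub_cos (hm : 0 ≤ m) (θ : ℝ) : k ≤ k + m * (1 - cos θ) :=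
  le_add_of_nonneg_right (mul_nonneg hm (sub_nonneg.2 (cos_le_one θ)))

lemma hasDerivAt_sin_half_div_sqrt {θ : ℝ} (hk : k ≠ 0) (hw : 0 < k + m * (1 - cos θ)) :
    HasDerivAt (fun θ ↦ 2 / k * (sin (θ / 2) / √(k + m * (1 - cos θ))))
      (cos (θ / 2) / √(k + m * (1 - cos θ)) ^ 3) θ := by
  have hsin : HasDerivAt (fun θ : ℝ ↦ sin (θ / 2)) (cos (θ / 2) * (1 / 2)) θ :=
    ((hasDerivAt_id' θ).div_const 2).sin
  have hin : HasDerivAt (fun θ ↦ k + m * (1 - cos θ)) (m * - -sin θ) θ :=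
    (((hasDerivAt_cos θ).const_sub 1).const_mul m).const_add k
  have hsqrt : 0 < √(k + m * (1 - cos θ)) := sqrt_pos.2 hw
  refine ((hsin.fun_div (hin.sqrt hw.ne') hsqrt.ne').const_mul (2 / k)).congr_deriv ?_
  have hsq : √(k + m * (1 - cos θ)) ^ 2 = k + m * (2 * sin (θ / 2) ^ 2) := by
    rw [sq_sqrt hw.le, one_sub_cos_eq_two_mul_sin_half_sq]
  have hdouble : sin θ = 2 * sin (θ / 2) * cos (θ / 2) := by
    rw [← sin_two_mul, mul_div_cancel₀ θ two_ne_zero]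
  rw [hdouble]
  field_simp
  linear_combination cos (θ / 2) * hsq

lemma continuous_cos_half_div_sqrt_pow (hk : 0 < k) (hm : 0 ≤ m) :
    Continuous fun θ ↦ cos (θ / 2) / √(k + m * (1 - cos θ)) ^ 3 :=
  .div (by fun_prop) (by fun_prop) fun θ ↦
    (pow_pos (sqrt_pos.2 (hk.trans_le (le_add_mul_one_sub_cos hm θ))) 3).ne'

lemma integral_cos_half_div_sqrt_pow (hk : 0 < k) (hm : 0 ≤ m) :
    ∫ θ in (-π)..π, cos (θ / 2) / √(k + m * (1 - cos θ)) ^ 3 = 4 / (k * √(k + 2 * m)) := by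
  rw [integral_eq_sub_of_hasDerivAt
    (fun θ _ ↦ hasDerivAt_sin_half_div_sqrt hk.ne' (hk.trans_le (le_add_mul_one_sub_cos hm θ)))
    ((continuous_cos_half_div_sqrt_pow hk hm).intervalIntegrable _ _)]
  simp only [cos_neg, cos_pi, neg_div, sin_neg, sin_pi_div_two]
  rw [show k + m * (1 - -1) = k + 2 * m by ring]
  field_simp
  norm_num

end TrigonometricIntegrals

/-- The integrand left, up to the factor `2 π`, after integrating the area of the inverted torus
over a meridian circle. The parameter `D` is fixed by the translation, while `w` depends on the
angle `θ` around the axis and is small near the point of the torus closest to the origin. -/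
noncomputable def meridianDensity (D w : ℝ) : ℝ :=
  (D + w) / √(w * (2 * D + w)) ^ 3

section Concentration

variable {k m D w c : ℝ}

lemma abs_meridianDensity_sub_le (hD : 1 ≤ 2 * D) (hw : 0 < w) (hc : c ≤ 1) (hcw : 1 - c ≤ w) :
    |meridianDensity D w - 1 / (2 * √(2 * D)) * (c / √w ^ 3)| ≤ 1 / √w := by
  rw [meridianDensity, sqrt_mul hw.le]
  have hV₀ : 1 ≤ √(2 * D) := one_le_sqrt.2 hD
  have hV : 1 ≤ √(2 * D + w) := one_le_sqrt.2 (by linarith)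
  have hv : 0 < √w := sqrt_pos.2 hw
  have hV₀sq : √(2 * D) ^ 2 = 2 * D := sq_sqrt (by linarith)
  have hVsq : √(2 * D + w) ^ 2 = 2 * D + w := sq_sqrt (by linarith)
  have hvsq : √w ^ 2 = w := sq_sqrt hw.le
  generalize √(2 * D) = V₀ at *
  generalize √(2 * D + w) = V at *
  generalize √w = v at *
  have hdecomp : (D + w) / (v * V) ^ 3 - 1 / (2 * V₀) * (c / v ^ 3)
      = (w / (2 * V ^ 3) - w / (2 * (V * V₀ * (V + V₀))) + (1 - c) / (2 * V₀)) / v ^ 3 := by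
    have hD' : D = V₀ ^ 2 / 2 := by linarith
    have hw' : w = V ^ 2 - V₀ ^ 2 := by linarith
    rw [hD', hw']
    field_simp
    ring
  have h₁ : w / (2 * V ^ 3) ≤ w / 2 :=
    div_le_div_of_nonneg_left hw.le two_pos (by linarith [one_le_pow₀ hV (n := 3)])
  have h₂ : w / (2 * (V * V₀ * (V + V₀))) ≤ w / 2 :=
    div_le_div_of_nonneg_left hw.le two_pos
      (by nlinarith [one_le_mul_of_one_le_of_one_le hV hV₀])
  have h₃ : (1 - c) / (2 * V₀) ≤ w / 2 := div_le_div₀ hw.le hcw two_pos (by linarith)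
  have h₁' : 0 ≤ w / (2 * V ^ 3) := by positivity
  have h₂' : 0 ≤ w / (2 * (V * V₀ * (V + V₀))) := by positivity
  have h₃' : 0 ≤ (1 - c) / (2 * V₀) := div_nonneg (sub_nonneg.2 hc) (by linarith)
  have hnum : |w / (2 * V ^ 3) - w / (2 * (V * V₀ * (V + V₀))) + (1 - c) / (2 * V₀)| ≤ w :=
    abs_le.2 ⟨by linarith, by linarith⟩
  calc |(D + w) / (v * V) ^ 3 - 1 / (2 * V₀) * (c / v ^ 3)|
      = |w / (2 * V ^ 3) - w / (2 * (V * V₀ * (V + V₀))) + (1 - c) / (2 * V₀)| / v ^ 3 := by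
        rw [hdecomp, abs_div, abs_of_pos (pow_pos hv 3)]
    _ ≤ v ^ 2 / v ^ 3 := by rw [hvsq]; gcongr
    _ = 1 / v := by field_simp

lemma one_sub_cos_half_le {θ : ℝ} (hθ : |θ| ≤ π) : 1 - cos (θ / 2) ≤ (1 - cos θ) / 2 := by
  have hcos : 0 ≤ cos (θ / 2) :=
    cos_nonneg_of_neg_pi_div_two_le_of_le (by linarith [abs_le.1 hθ]) (by linarith [abs_le.1 hθ])
  rw [one_sub_cos_eq_two_mul_sin_half_sq θ]
  nlinarith [sin_sq_add_cos_sq (θ / 2), cos_le_one (θ / 2)]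

lemma abs_integral_meridianDensity_sub_le (hk : 0 < k) (hm : 1 / 2 ≤ m) (hD : 1 ≤ 2 * D) :
    |(∫ θ in (-π)..π, meridianDensity D (k + m * (1 - cos θ)))
      - 2 / (k * √(2 * D * (k + 2 * m)))| ≤ 2 * π / √k := by
  have hw (θ : ℝ) : k ≤ k + m * (1 - cos θ) := le_add_mul_one_sub_cos (by linarith) θ
  have hcont₁ : Continuous fun θ ↦ meridianDensity D (k + m * (1 - cos θ)) :=
    .div (by fun_prop) (by fun_prop) fun θ ↦ (pow_pos (sqrt_pos.2 (mul_pos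
      (hk.trans_le (hw θ)) (by linarith [hw θ]))) 3).ne'
  have hcont₂ := (continuous_cos_half_div_sqrt_pow hk (by linarith : 0 ≤ m)).const_mul
    (1 / (2 * √(2 * D)))
  have hmain : 2 / (k * √(2 * D * (k + 2 * m))) = ∫ θ in (-π)..π,
      1 / (2 * √(2 * D)) * (cos (θ / 2) / √(k + m * (1 - cos θ)) ^ 3) := by
    rw [integral_const_mul, integral_cos_half_div_sqrt_pow hk (by linarith),
      sqrt_mul (by linarith)]
    ring
  rw [hmain, ← integral_sub (hcont₁.intervalIntegrable _ _) (hcont₂.intervalIntegrable _ _),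
    ← norm_eq_abs]
  refine (norm_integral_le_of_norm_le_const (C := 1 / √k) fun θ hθ ↦ ?_).trans_eq ?_
  · rw [Set.uIoc_of_le (by linarith [pi_pos])] at hθ
    have hcos := one_sub_cos_half_le (abs_le.2 ⟨hθ.1.le, hθ.2⟩)
    have hcos' : 1 - cos (θ / 2) ≤ k + m * (1 - cos θ) := by
      nlinarith [cos_le_one θ]
    exact (abs_meridianDensity_sub_le hD (hk.trans_le (hw θ)) (cos_le_one _) hcos').trans
      (one_div_le_one_div_of_le (sqrt_pos.2 hk) (sqrt_le_sqrt (hw θ)))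
  · rw [sub_neg_eq_add, abs_of_pos (by linarith [pi_pos])]
    ring

end Concentration

section CliffordTorus

variable {s : ℝ}

lemma degArea_eq_pow_four_mul (s η : ℝ) : degArea s η = η ^ 4 * degArea s 1 := by
  simp only [degArea, one_pow, one_mul]

lemma cliffordX_distSq (a φ θ : ℝ) :
    (cliffordX φ θ 0 - a) ^ 2 + cliffordX φ θ 1 ^ 2 + cliffordX φ θ 2 ^ 2
      = (3 + a ^ 2 - 2 * √2 * a * cos θ) + (2 * √2 - 2 * a * cos θ) * cos φ := by
  simp only [cliffordX, Matrix.cons_val_zero, Matrix.cons_val_one, Matrix.cons_val]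
  linear_combination (√2 + cos φ) ^ 2 * sin_sq_add_cos_sq θ + sin_sq_add_cos_sq φ
    + sq_sqrt (zero_le_two (α := ℝ))

lemma abs_distSq_coeff_lt {a : ℝ} (ha : √2 + 1 < a) (θ : ℝ) :
    |2 * √2 - 2 * a * cos θ| < 3 + a ^ 2 - 2 * √2 * a * cos θ := by
  have h2 : √2 ^ 2 = 2 := sq_sqrt zero_le_two
  have hr := one_lt_sqrt_two
  have hcos : 0 ≤ a * (1 - cos θ) := mul_nonneg (by linarith) (sub_nonneg.2 (cos_le_one θ))
  have hfar : 0 < (a - (√2 - 1)) ^ 2 + 2 * (√2 - 1) * (a * (1 - cos θ)) :=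
    add_pos_of_pos_of_nonneg (pow_pos (by linarith) 2) (mul_nonneg (by linarith) hcos)
  have hnear : 0 < (a - (√2 + 1)) ^ 2 + 2 * (√2 + 1) * (a * (1 - cos θ)) :=
    add_pos_of_pos_of_nonneg (pow_pos (by linarith) 2) (mul_nonneg (by linarith) hcos)
  exact abs_lt.2 ⟨by linarith, by linarith⟩

lemma integral_cliffordX_meridian (hs : 0 < s) (θ : ℝ) :
    ∫ φ in (-π)..π, (√2 + cos φ) / ((cliffordX φ θ 0 - (√2 + 1 + s)) ^ 2
        + cliffordX φ θ 1 ^ 2 + cliffordX φ θ 2 ^ 2) ^ 2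
      = 2 * π * meridianDensity ((√2 + 1 + s) ^ 2 - 1)
          ((√2 - 1) * s ^ 2 + 2 * (√2 + 1 + s) * (1 - cos θ)) := by
  have h2 : √2 ^ 2 = 2 := sq_sqrt zero_le_two
  have hint := integral_add_mul_cos_div_sq √2 1 (abs_distSq_coeff_lt (lt_add_of_pos_right _ hs) θ)
  simp only [one_mul] at hint
  simp only [cliffordX_distSq, hint]
  set a := √2 + 1 + s with ha
  set P := 3 + a ^ 2 - 2 * √2 * a * cos θ with hP
  set Q := 2 * √2 - 2 * a * cos θ with hQ
  set w := (√2 - 1) * s ^ 2 + 2 * a * (1 - cos θ) with hw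
  have hD : a ^ 2 - 1 = P - √2 * Q := by
    rw [hP, hQ]
    linear_combination 2 * h2
  have hDw : a ^ 2 - 1 + w = √2 * P - Q := by
    rw [hP, hQ, hw, show s = a - √2 - 1 by rw [ha]; ring]
    linear_combination (√2 + 1 - 2 * a + 2 * a * cos θ) * h2
  have hprod : w * (2 * (a ^ 2 - 1) + w) = P ^ 2 - Q ^ 2 := by
    linear_combination (a ^ 2 - 1 + w + √2 * P - Q) * hDw - (a ^ 2 - 1 + P - √2 * Q) * hD
      + (P ^ 2 - Q ^ 2) * h2
  rw [meridianDensity, hDw, hprod]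

lemma degArea_eq_integral (hs : 0 < s) :
    degArea s 1 = 2 * π * ∫ θ in (-π)..π, meridianDensity ((√2 + 1 + s) ^ 2 - 1)
      ((√2 - 1) * s ^ 2 + 2 * (√2 + 1 + s) * (1 - cos θ)) := by
  rw [degArea, one_pow, one_mul, ← integral_const_mul]
  exact integral_congr fun θ _ ↦ integral_cliffordX_meridian hs θ

/-- The main term of `s ^ 2 * degArea s 1` as `s → 0`, obtained by replacing `meridianDensity D w`
with `cos (θ / 2) / (2 √(2 D) w ^ (3/2))`. -/
noncomputable def leadingArea (s : ℝ) : ℝ :=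
  4 * π * (√2 + 1) / √(2 * ((√2 + 1 + s) ^ 2 - 1) * ((√2 - 1) * s ^ 2 + 2 * (2 * (√2 + 1 + s))))

lemma abs_sq_mul_degArea_sub_leadingArea_le (hs : 0 < s) :
    |s ^ 2 * degArea s 1 - leadingArea s| ≤ 4 * π ^ 2 / √(√2 - 1) * s := by
  have hr : 0 < √2 - 1 := sub_pos.2 one_lt_sqrt_two
  have hinv : √2 + 1 = 1 / (√2 - 1) := by
    rw [eq_div_iff hr.ne']
    linear_combination sq_sqrt (zero_le_two (α := ℝ))
  have hest := abs_integral_meridianDensity_sub_le (k := (√2 - 1) * s ^ 2)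
    (m := 2 * (√2 + 1 + s)) (D := (√2 + 1 + s) ^ 2 - 1) (by positivity) (by linarith)
    (by nlinarith)
  have hint := degArea_eq_integral hs
  rw [mul_comm (2 * π), ← div_eq_iff two_pi_pos.ne'] at hint
  rw [← hint] at hest
  rw [leadingArea]
  generalize √(2 * ((√2 + 1 + s) ^ 2 - 1) * _) = T at *
  have hfactor : s ^ 2 * degArea s 1 - 4 * π * (√2 + 1) / T
      = 2 * π * s ^ 2 * (degArea s 1 / (2 * π) - 2 / ((√2 - 1) * s ^ 2 * T)) := by
    rw [hinv]
    field_simp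
    ring
  rw [hfactor, abs_mul, abs_of_pos (by positivity)]
  calc 2 * π * s ^ 2 * |degArea s 1 / (2 * π) - 2 / ((√2 - 1) * s ^ 2 * T)|
      ≤ 2 * π * s ^ 2 * (2 * π / √((√2 - 1) * s ^ 2)) := by gcongr
    _ = 4 * π ^ 2 / √(√2 - 1) * s := by
      rw [sqrt_mul hr.le, sqrt_sq hs.le]
      field_simp
      ring

lemma isBigO_leadingArea_sub_pi : (fun s ↦ leadingArea s - π) =O[𝓝[>] 0] fun s ↦ s := by
  have hzero : 2 * ((√2 + 1 + 0) ^ 2 - 1) * ((√2 - 1) * 0 ^ 2 + 2 * (2 * (√2 + 1 + 0)))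
      = (4 * (√2 + 1)) ^ 2 := by
    linear_combination 8 * (√2 + 1) * sq_sqrt (zero_le_two (α := ℝ))
  have hsqrt : √((4 * (√2 + 1)) ^ 2) = 4 * (√2 + 1) := sqrt_sq (by positivity)
  have hdiff : DifferentiableAt ℝ leadingArea 0 := by
    refine .fun_div (by fun_prop) (.sqrt (by fun_prop) ?_) ?_
    · rw [hzero]; positivity
    · rw [hzero, hsqrt]; positivity
  have hval : leadingArea 0 = π := by
    rw [leadingArea, hzero, hsqrt]
    field_simp
  have hO := hdiff.isBigO_sub.mono (nhdsWithin_le_nhds (s := Set.Ioi 0))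
  simpa only [hval, sub_zero] using hO

lemma isBigO_sq_mul_degArea_sub_pi :
    (fun s : ℝ ↦ s ^ 2 * degArea s 1 - π) =O[𝓝[>] 0] fun s ↦ s := by
  have hest : (fun s ↦ s ^ 2 * degArea s 1 - leadingArea s) =O[𝓝[>] 0] fun s ↦ s := by
    refine .of_bound (4 * π ^ 2 / √(√2 - 1)) ?_
    filter_upwards [self_mem_nhdsWithin] with s (hs : 0 < s)
    simpa only [norm_eq_abs, abs_of_pos hs] using abs_sq_mul_degArea_sub_leadingArea_le hs
  exact hest.triangle isBigO_leadingArea_sub_pi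

lemma cliffordX_zero_le (φ θ : ℝ) : cliffordX φ θ 0 ≤ √2 + 1 := by
  have hr := one_lt_sqrt_two
  simp only [cliffordX, Matrix.cons_val_zero]
  nlinarith [neg_one_le_cos φ, cos_le_one φ, cos_le_one θ]

lemma abs_degArea_le (hs : 0 < s) (η : ℝ) :
    |degArea s η| ≤ 4 * π ^ 2 * (√2 + 1) * (η / s) ^ 4 := by
  have hdist (φ θ : ℝ) : s ^ 2 ≤ (cliffordX φ θ 0 - (√2 + 1 + s)) ^ 2
      + cliffordX φ θ 1 ^ 2 + cliffordX φ θ 2 ^ 2 := by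
    nlinarith [cliffordX_zero_le φ θ, sq_nonneg (cliffordX φ θ 1), sq_nonneg (cliffordX φ θ 2)]
  have hpoint (φ θ : ℝ) : ‖(√2 + cos φ) / ((cliffordX φ θ 0 - (√2 + 1 + s)) ^ 2
      + cliffordX φ θ 1 ^ 2 + cliffordX φ θ 2 ^ 2) ^ 2‖ ≤ (√2 + 1) / (s ^ 2) ^ 2 := by
    have hnum : |√2 + cos φ| ≤ √2 + 1 := abs_le.2
      ⟨by linarith [neg_one_le_cos φ, sqrt_nonneg 2], by linarith [cos_le_one φ]⟩
    rw [norm_div, norm_pow, norm_eq_abs, norm_eq_abs,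
      abs_of_nonneg ((sq_nonneg s).trans (hdist φ θ))]
    gcongr
    exact hdist φ θ
  have hint := norm_integral_le_of_norm_le_const (a := -π) (b := π) fun θ _ ↦
    norm_integral_le_of_norm_le_const (a := -π) (b := π) fun φ _ ↦ hpoint φ θ
  rw [sub_neg_eq_add, abs_of_pos (by linarith [pi_pos]), norm_eq_abs] at hint
  rw [degArea, abs_mul, abs_of_nonneg (by positivity : 0 ≤ η ^ 4)]
  refine (mul_le_mul_of_nonneg_left hint (by positivity)).trans_eq ?_
  field_simp
  ring

end CliffordTorus

section PrescribedArea

variable {xt : ℝ → ℝ} {A : ℝ}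

lemma tendsto_nhdsGT_zero_of_degArea_eq (hA : 0 < A) (hpos : ∀ᶠ η in 𝓝[>] 0, 0 < xt η)
    (harea : ∀ᶠ η in 𝓝[>] 0, degArea (xt η) η = A) : Tendsto xt (𝓝[>] 0) (𝓝[>] 0) := by
  have hO : (xt ^ 4) =O[𝓝[>] 0] ((fun η ↦ η) ^ 4) := by
    refine .of_bound (4 * π ^ 2 * (√2 + 1) / A) ?_
    filter_upwards [hpos, harea] with η hx hη
    have hle := abs_degArea_le hx η
    rw [hη, abs_of_pos hA, div_pow, ← mul_div_assoc, le_div_iff₀ (by positivity)] at hle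
    rw [Pi.pow_apply, Pi.pow_apply, norm_of_nonneg (by positivity), norm_of_nonneg (by positivity),
      div_mul_eq_mul_div, le_div_iff₀ hA]
    linarith
  exact tendsto_nhdsWithin_iff.2
    ⟨(hO.of_pow four_ne_zero).trans_tendsto nhdsWithin_le_nhds, hpos⟩

lemma eventually_pow_four_div_sq_eq (hpos : ∀ᶠ η in 𝓝[>] 0, 0 < xt η)
    (harea : ∀ᶠ η in 𝓝[>] 0, degArea (xt η) η = A) :
    ∀ᶠ η in 𝓝[>] 0, η ^ 4 / xt η ^ 2 * (xt η ^ 2 * degArea (xt η) 1) = A := by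
  filter_upwards [hpos, harea] with η hx hη
  rw [← hη, degArea_eq_pow_four_mul _ η]
  field_simp

lemma tendsto_pow_four_div_sq (hA : 0 < A) (hpos : ∀ᶠ η in 𝓝[>] 0, 0 < xt η)
    (harea : ∀ᶠ η in 𝓝[>] 0, degArea (xt η) η = A) :
    Tendsto (fun η ↦ η ^ 4 / xt η ^ 2) (𝓝[>] 0) (𝓝 (A / π)) := by
  have hlim : Tendsto (fun s ↦ s ^ 2 * degArea s 1) (𝓝[>] 0) (𝓝 π) :=
    tendsto_sub_nhds_zero_iff.1 (isBigO_sq_mul_degArea_sub_pi.trans_tendsto nhdsWithin_le_nhds)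
  have hM := hlim.comp (tendsto_nhdsGT_zero_of_degArea_eq hA hpos harea)
  refine (tendsto_const_nhds.div hM pi_ne_zero).congr' ?_
  filter_upwards [eventually_pow_four_div_sq_eq hpos harea,
    hM.eventually_ne pi_ne_zero] with η h hne
  exact (eq_div_of_mul_eq hne h).symm

lemma isBigO_sq_of_degArea_eq (hA : 0 < A) (hpos : ∀ᶠ η in 𝓝[>] 0, 0 < xt η)
    (harea : ∀ᶠ η in 𝓝[>] 0, degArea (xt η) η = A) : xt =O[𝓝[>] 0] fun η ↦ η ^ 2 := by
  have hinv := ((tendsto_pow_four_div_sq hA hpos harea).inv₀ (by positivity)).isBigO_one ℝ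
  refine IsBigO.of_pow two_ne_zero (((hinv.mul (isBigO_refl (fun η ↦ η ^ 4) _)).congr' ?_ ?_))
  · filter_upwards [self_mem_nhdsWithin] with η (hη : 0 < η)
    rw [Pi.pow_apply]
    field_simp
  · filter_upwards with η
    rw [Pi.pow_apply, one_mul, ← pow_mul]

theorem stmt9_general (hA : 0 < A) (hpos : ∀ᶠ η in 𝓝[>] 0, 0 < xt η)
    (harea : ∀ᶠ η in 𝓝[>] 0, degArea (xt η) η = A) :
    Tendsto (fun η ↦ η ^ 2 / xt η) (𝓝[>] 0) (𝓝 √(A / π)) ∧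
      (fun η ↦ η ^ 4 / xt η ^ 2 - A / π) =O[𝓝[>] 0] fun η ↦ η ^ 2 := by
  have hlim := tendsto_pow_four_div_sq hA hpos harea
  constructor
  · refine hlim.sqrt.congr' ?_
    filter_upwards [hpos] with η hx
    rw [show η ^ 4 / xt η ^ 2 = (η ^ 2 / xt η) ^ 2 by ring, sqrt_sq (by positivity)]
  · have hM : (fun η ↦ xt η ^ 2 * degArea (xt η) 1 - π) =O[𝓝[>] 0] fun η ↦ η ^ 2 :=
      (isBigO_sq_mul_degArea_sub_pi.comp_tendsto
        (tendsto_nhdsGT_zero_of_degArea_eq hA hpos harea)).trans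
        (isBigO_sq_of_degArea_eq hA hpos harea)
    refine (((hlim.isBigO_one ℝ).mul hM).const_mul_left (-π⁻¹)).congr' ?_ (by simp)
    filter_upwards [eventually_pow_four_div_sq_eq hpos harea] with η h
    rw [← h]
    field_simp
    ring

lemma sqrt_four_mul_sqrt_two_mul_pi : √(4 * √2 * π) = 2 * (2 * π ^ 2) ^ ((1 : ℝ) / 4) := by
  have hsq : ((2 * π ^ 2) ^ ((1 : ℝ) / 4)) ^ 2 = √2 * π := by
    rw [← rpow_mul_natCast (by positivity), show (1 : ℝ) / 4 * (2 : ℕ) = 1 / 2 by norm_num,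
      ← sqrt_eq_rpow, sqrt_mul zero_le_two, sqrt_sq pi_nonneg]
  rw [sqrt_eq_iff_mul_self_eq (by positivity) (by positivity)]
  linear_combination -4 * hsq

end PrescribedArea

/-- If `ξ̃_η > 0` is such that the inversion `Φ_{0,η}` of the translated torus
`𝕋_{ξ̃_η}` has area `4√2π²`, then `η²/ξ̃_η → 2(2π²)^{1/4}` as `η → 0⁺`; more
precisely `η⁴/ξ̃_η² = 4√2π + O(η²)`. -/
theorem stmt9 (xt : ℝ → ℝ) (hpos : ∀ η : ℝ, 0 < η → 0 < xt η)
    (harea : ∀ η : ℝ, 0 < η → degArea (xt η) η = 4 * Real.sqrt 2 * π ^ 2) :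
    Filter.Tendsto (fun η => η ^ 2 / xt η) (nhdsWithin 0 (Set.Ioi 0))
      (nhds (2 * (2 * π ^ 2) ^ ((1:ℝ)/4))) ∧
    ∃ C : ℝ, ∀ᶠ η in nhdsWithin 0 (Set.Ioi 0),
      |η ^ 4 / (xt η) ^ 2 - 4 * Real.sqrt 2 * π| ≤ C * η ^ 2 := by
  have hmem : ∀ᶠ η : ℝ in 𝓝[>] 0, 0 < η := self_mem_nhdsWithin
  have harea_div : 4 * √2 * π ^ 2 / π = 4 * √2 * π := by field_simp
  obtain ⟨hlim, hrate⟩ := stmt9_general (by positivity) (hmem.mono hpos) (hmem.mono harea)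
  rw [harea_div, sqrt_four_mul_sqrt_two_mul_pi] at hlim
  rw [harea_div] at hrate
  obtain ⟨C, hC⟩ := hrate.bound
  exact ⟨hlim, C, by simpa only [norm_eq_abs, abs_sq] using hC⟩
end
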